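/- Let F be a Minkowski norm on a finite-dimensional real vector space E. Then F satisfies the triangle inequality F(v + w) ≤ F(v) + F(w) for all v, w ∈ E, and equality holds if and only if v = a·w or w = a·v for some real number a ≥ 0. -/

import Mathlib

/-!
The triangle inequality follows from strict convexity of `F²` along line segments that avoid the
origin: the second derivative of `t ↦ F(v + t u)²` is `2 g(u, u)`, with `g` the fundamental tensor
at `v + t u`, hence positive (`IsMinkowskiNorm.strictConvexOn_sq_line`). Given nonzero `v`, `w`,
the vector `(v + w) / (F v + F w)` is a proper convex combination of the `F`-unit vectors `v / F v`
and `w / F w`. If these are distinct and the segment joining them avoids `0`, strict convexity puts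
this combination strictly inside the unit ball, so the inequality is strict. If they coincide then
`v` and `w` lie on a common ray; if the segment meets `0` then `v` and `w` are negative multiples of
one another and strictness is immediate from homogeneity and positivity.
-/

/-- The fundamental tensor of `F` at `v`: `g_v(w₁, w₂) := (1/2)·D²(F²)(v)[w₁, w₂]`,
given by the second Fréchet derivative of `F²` at `v`. -/
noncomputable def fundamentalTensor {E : Type*} [NormedAddCommGroup E] [NormedSpace ℝ E]
    (F : E → ℝ) (v w₁ w₂ : E) : ℝ :=
  (1 / 2 : ℝ) * iteratedFDeriv ℝ 2 (fun x => F x ^ 2) v ![w₁, w₂]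

/-- A **Minkowski norm** on a real vector space `E`: `F ≥ 0`, positive away from `0`,
smooth on `E \ {0}`, positively `1`-homogeneous, and with positive definite
fundamental tensor `g_v` for every `v ≠ 0`. -/
structure IsMinkowskiNorm {E : Type*} [NormedAddCommGroup E] [NormedSpace ℝ E]
    (F : E → ℝ) : Prop where
  nonneg : ∀ v : E, 0 ≤ F v
  pos : ∀ v : E, v ≠ 0 → 0 < F v
  smooth : ContDiffOn ℝ (⊤ : ℕ∞) F {(0 : E)}ᶜ
  homog : ∀ c : ℝ, 0 ≤ c → ∀ v : E, F (c • v) = c * F v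
  posdef : ∀ v : E, v ≠ 0 → ∀ w : E, w ≠ 0 → 0 < fundamentalTensor F v w w

/-- The dual norm `F*(α) := sup {α(v) : F(v) ≤ 1}` on the dual space. -/
noncomputable def dualNorm {E : Type*} [NormedAddCommGroup E] [NormedSpace ℝ E]
    (F : E → ℝ) (α : E →L[ℝ] ℝ) : ℝ :=
  sSup ((fun v => α v) '' {v : E | F v ≤ 1})

namespace IsMinkowskiNorm

variable {E : Type*} [NormedAddCommGroup E] [NormedSpace ℝ E] {F : E → ℝ}

lemma contDiffAt_sq (hF : IsMinkowskiNorm F) {x : E} (hx : x ≠ 0) :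
    ContDiffAt ℝ (⊤ : ℕ∞) (fun y => F y ^ 2) x :=
  (hF.smooth.contDiffAt (isOpen_compl_singleton.mem_nhds hx)).pow 2

lemma hasDerivAt_sq_line (hF : IsMinkowskiNorm F) (v u : E) {t : ℝ} (ht : v + t • u ≠ 0) :
    HasDerivAt (fun s : ℝ => F (v + s • u) ^ 2)
      (fderiv ℝ (fun y => F y ^ 2) (v + t • u) u) t := by
  have h1 : HasDerivAt (fun s : ℝ => v + s • u) u t := by
    simpa using ((hasDerivAt_id t).smul_const u).const_add v
  exact ((hF.contDiffAt_sq ht).differentiableAt (by simp)).hasFDerivAt.comp_hasDerivAt t h1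

/-- The second derivative of `F²` along a line is twice the fundamental tensor. -/
lemma deriv2_sq_line (hF : IsMinkowskiNorm F) (v u : E) {t : ℝ} (ht : v + t • u ≠ 0) :
    deriv^[2] (fun s : ℝ => F (v + s • u) ^ 2) t = 2 * fundamentalTensor F (v + t • u) u u := by
  have h1 : HasDerivAt (fun s : ℝ => v + s • u) u t := by
    simpa using ((hasDerivAt_id t).smul_const u).const_add v
  have hev : deriv (fun s : ℝ => F (v + s • u) ^ 2) =ᶠ[nhds t]
      fun s => fderiv ℝ (fun y => F y ^ 2) (v + s • u) u := by
    filter_upwards [h1.continuousAt.eventually_ne ht] with s hs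
    exact (hF.hasDerivAt_sq_line v u hs).deriv
  have hd : DifferentiableAt ℝ (fderiv ℝ (fun y => F y ^ 2)) (v + t • u) :=
    ((hF.contDiffAt_sq ht).fderiv_right (m := 1) (by norm_cast)).differentiableAt (by simp)
  have h2 : HasDerivAt (fun s : ℝ => fderiv ℝ (fun y => F y ^ 2) (v + s • u))
      (fderiv ℝ (fderiv ℝ (fun y => F y ^ 2)) (v + t • u) u) t :=
    hd.hasFDerivAt.comp_hasDerivAt t h1
  have h3 : HasDerivAt (fun s : ℝ => fderiv ℝ (fun y => F y ^ 2) (v + s • u) u)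
      (fderiv ℝ (fderiv ℝ (fun y => F y ^ 2)) (v + t • u) u u) t := by
    simpa using h2.clm_apply (hasDerivAt_const t u)
  have h4 : 2 * fundamentalTensor F (v + t • u) u u
      = fderiv ℝ (fderiv ℝ (fun y => F y ^ 2)) (v + t • u) u u := by
    rw [fundamentalTensor, iteratedFDeriv_two_apply]
    simp
  rw [h4, ← h3.deriv, ← hev.deriv_eq]
  rfl

lemma strictConvexOn_sq_line (hF : IsMinkowskiNorm F) (v : E) {u : E} (hu : u ≠ 0)
    (h0 : ∀ t ∈ Set.Icc (0 : ℝ) 1, v + t • u ≠ 0) :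
    StrictConvexOn ℝ (Set.Icc (0 : ℝ) 1) (fun s : ℝ => F (v + s • u) ^ 2) := by
  refine strictConvexOn_of_deriv2_pos (convex_Icc 0 1)
    (fun t ht => (hF.hasDerivAt_sq_line v u (h0 t ht)).continuousAt.continuousWithinAt) ?_
  intro t ht
  have ht' := h0 t (interior_subset ht)
  rw [hF.deriv2_sq_line v u ht']
  have := hF.posdef _ ht' u hu
  positivity

/-- The `F`-unit ball is strictly convex along segments between unit vectors avoiding `0`. -/
lemma lt_one_of_unit (hF : IsMinkowskiNorm F) {x y : E} (hx : F x = 1) (hy : F y = 1)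
    (hxy : x ≠ y) (h0 : ∀ t ∈ Set.Icc (0 : ℝ) 1, x + t • (y - x) ≠ 0) {s : ℝ}
    (hs0 : 0 < s) (hs1 : s < 1) : F (x + s • (y - x)) < 1 := by
  have h := (hF.strictConvexOn_sq_line x (sub_ne_zero.2 hxy.symm) h0).2
    (Set.left_mem_Icc.2 zero_le_one) (Set.right_mem_Icc.2 zero_le_one) zero_ne_one
    (sub_pos.2 hs1) hs0 (sub_add_cancel 1 s)
  simp only [smul_eq_mul, mul_zero, mul_one, zero_add, zero_smul, add_zero, one_smul,
    add_sub_cancel, hx, hy] at h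
  nlinarith [hF.nonneg (x + s • (y - x))]

lemma add_lt_of_eq_neg_smul (hF : IsMinkowskiNorm F) {v w : E} (hv : v ≠ 0) (hw : w ≠ 0)
    {c : ℝ} (hc0 : 0 < c) (hc1 : c ≤ 1) (h : v = -(c • w)) : F (v + w) < F v + F w := by
  have h1 : v + w = (1 - c) • w := by rw [h, sub_smul, one_smul]; abel
  rw [h1, hF.homog _ (by linarith)]
  nlinarith [hF.pos v hv, hF.pos w hw, mul_pos hc0 (hF.pos w hw)]

lemma add_eq_of_eq_smul (hF : IsMinkowskiNorm F) {v w : E} {a : ℝ} (ha : 0 ≤ a)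
    (h : v = a • w) : F (v + w) = F v + F w := by
  have h1 : v + w = (a + 1) • w := by rw [h, add_smul, one_smul]
  rw [h1, hF.homog _ (by linarith), h, hF.homog _ ha]; ring

/-- Strict triangle inequality for vectors that do not lie on a common ray. -/
lemma add_lt (hF : IsMinkowskiNorm F) {v w : E}
    (h : ¬ ∃ a : ℝ, 0 ≤ a ∧ (v = a • w ∨ w = a • v)) : F (v + w) < F v + F w := by
  have hv : v ≠ 0 := fun h0 => h ⟨0, le_rfl, Or.inl (by simp [h0])⟩
  have hw : w ≠ 0 := fun h0 => h ⟨0, le_rfl, Or.inr (by simp [h0])⟩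
  have pv := hF.pos v hv
  have pw := hF.pos w hw
  by_cases hneg : ∃ c : ℝ, 0 < c ∧ v = -(c • w)
  · obtain ⟨c, hc, e⟩ := hneg
    rcases le_total c 1 with h1 | h1
    · exact hF.add_lt_of_eq_neg_smul hv hw hc h1 e
    · have e' : w = -(c⁻¹ • v) := by rw [e, smul_neg, neg_neg, inv_smul_smul₀ hc.ne']
      rw [add_comm v, add_comm (F v)]
      exact hF.add_lt_of_eq_neg_smul hw hv (inv_pos.2 hc) (inv_le_one_of_one_le₀ h1) e'
  · have hx : F ((F v)⁻¹ • v) = 1 := by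
      rw [hF.homog _ (inv_nonneg.2 pv.le), inv_mul_cancel₀ pv.ne']
    have hy : F ((F w)⁻¹ • w) = 1 := by
      rw [hF.homog _ (inv_nonneg.2 pw.le), inv_mul_cancel₀ pw.ne']
    have hxy : (F v)⁻¹ • v ≠ (F w)⁻¹ • w := fun e =>
      h ⟨F v * (F w)⁻¹, by positivity, Or.inl (by rw [mul_smul, ← e, smul_inv_smul₀ pv.ne'])⟩
    have h0 : ∀ t ∈ Set.Icc (0 : ℝ) 1,
        (F v)⁻¹ • v + t • ((F w)⁻¹ • w - (F v)⁻¹ • v) ≠ 0 := by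
      rintro t ⟨ht0, ht1⟩ e
      have e1 : ((1 - t) * (F v)⁻¹) • v + (t * (F w)⁻¹) • w = 0 := by
        rw [← e]; module
      rcases ht0.eq_or_lt with rfl | ht0
      · simp [pv.ne', hv] at e1
      rcases ht1.eq_or_lt with rfl | ht1
      · simp [pw.ne', hw] at e1
      have ha : 0 < (1 - t) * (F v)⁻¹ := mul_pos (sub_pos.2 ht1) (inv_pos.2 pv)
      refine hneg ⟨((1 - t) * (F v)⁻¹)⁻¹ * (t * (F w)⁻¹), by positivity, ?_⟩
      rw [mul_smul, ← smul_neg, ← eq_neg_of_add_eq_zero_left e1, inv_smul_smul₀ ha.ne']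
    have ps : 0 < F v + F w := by positivity
    -- The parameter at which the segment between the unit vectors meets the ray of `v + w`.
    have key := hF.lt_one_of_unit hx hy hxy h0 (s := F w / (F v + F w)) (by positivity)
      ((div_lt_one ps).2 (by linarith))
    have e : (F v)⁻¹ • v + (F w / (F v + F w)) • ((F w)⁻¹ • w - (F v)⁻¹ • v)
        = (F v + F w)⁻¹ • (v + w) := by
      match_scalars <;> field_simp
      ring
    rwa [e, hF.homog _ (inv_nonneg.2 ps.le), inv_mul_lt_one₀ ps] at key

end IsMinkowskiNorm

/-- **Strict convexity of a Minkowski norm** (Remark 2.2(b) of the paper).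
`F` satisfies the triangle inequality, with equality iff `v = a • w` or `w = a • v`
for some `a ≥ 0`. -/
theorem minkowski_triangle_inequality
    {E : Type*} [NormedAddCommGroup E] [NormedSpace ℝ E] [FiniteDimensional ℝ E]
    {F : E → ℝ} (hF : IsMinkowskiNorm F) :
    ∀ v w : E, F (v + w) ≤ F v + F w ∧
      (F (v + w) = F v + F w ↔ ∃ a : ℝ, 0 ≤ a ∧ (v = a • w ∨ w = a • v)) := by
  intro v w
  by_cases h : ∃ a : ℝ, 0 ≤ a ∧ (v = a • w ∨ w = a • v)
  · have e : F (v + w) = F v + F w := by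
      obtain ⟨a, ha, e | e⟩ := h
      · exact hF.add_eq_of_eq_smul ha e
      · rw [add_comm v, add_comm (F v)]
        exact hF.add_eq_of_eq_smul ha e
    exact ⟨e.le, iff_of_true e h⟩
  · have hlt := hF.add_lt h
    exact ⟨hlt.le, iff_of_false hlt.ne h⟩
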